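/- arXiv:1804.11217 — 2 statements merged into one kernel-verified Lean document; each statement's English description precedes it below -/
import Mathlib

section
/- Let Tₙ denote the letter graph of the periodic word abab⋯ab of length 2n with alphabet {a,b} and decoder {(a,b),(a,a)}. Then Tₙ contains every threshold graph on n vertices as an induced subgraph, i.e., Tₙ is an n-universal threshold graph. -/
/-- The letter graph of a word `w` over an alphabet `α` with decoder `P`:
vertices are positions `1,…,n`, and `i` is adjacent to `j > i` iff `(wᵢ, wⱼ) ∈ P`. -/
def letterGraph {n : ℕ} {α : Type*} (P : α → α → Prop) (w : Fin n → α) :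
    SimpleGraph (Fin n) where
  Adj i j := (i < j ∧ P (w i) (w j)) ∨ (j < i ∧ P (w j) (w i))
  symm := by
    refine ⟨?_⟩
    intro i j h
    rcases h with h | h
    · exact Or.inr h
    · exact Or.inl h
  loopless := by
    refine ⟨?_⟩
    intro i h
    rcases h with h | h <;> exact lt_irrefl i h.1

/-- The graph `2K₂`: two disjoint edges. -/
def twoK2 : SimpleGraph (Fin 4) := SimpleGraph.fromEdgeSet {s(0,1), s(2,3)}

/-- The chordless path `P₄`. -/
def P4 : SimpleGraph (Fin 4) := SimpleGraph.fromEdgeSet {s(0,1), s(1,2), s(2,3)}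

/-- The chordless cycle `C₄`. -/
def C4 : SimpleGraph (Fin 4) := SimpleGraph.fromEdgeSet {s(0,1), s(1,2), s(2,3), s(3,0)}

/-- The decoder `{(a,b),(a,a)}` over the alphabet `{a,b} = Fin 2` (`a = 0`, `b = 1`). -/
def thresholdDecoder : Fin 2 → Fin 2 → Prop := fun x y =>
  (x = 0 ∧ y = 1) ∨ (x = 0 ∧ y = 0)

/-- The periodic word `abab⋯ab` of length `2n`. -/
def periodicWord (n : ℕ) : Fin (2 * n) → Fin 2 := fun i =>
  if i.val % 2 = 0 then 0 else 1

/-!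
In a graph without induced `P₄`, `C₄` and `2K₂` any two vertices are comparable in the vicinal
preorder. Hence every nonempty set of vertices contains a vertex that is adjacent to all others or
to none of them: a greatest vertex, or else any of its non-neighbours. Removing such vertices one at
a time and spending one block `ab` of the word on each, a removed vertex takes the letter `a` of its
block if it dominates the vertices that remain and the letter `b` if it is isolated from them.
-/

/-- The vicinal preorder of a graph: `v` dominates `u` if every neighbour of `u` other than `v`
is a neighbour of `v`. Threshold graphs are the graphs in which any two vertices are
comparable. -/
def VicinalLE {V : Type*} (G : SimpleGraph V) (u v : V) : Prop :=
  ∀ ⦃x⦄, G.Adj u x → x ≠ v → G.Adj v x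

section ForbiddenSubgraphs

open SimpleGraph

theorem isIndContained_of_forall_lt {ι V : Type*} [LinearOrder ι] {H : SimpleGraph ι}
    {G : SimpleGraph V} (f : ι → V) (hne : ∀ i j, i < j → f i ≠ f j)
    (hadj : ∀ i j, i < j → (G.Adj (f i) (f j) ↔ H.Adj i j)) : H ⊴ G := by
  refine ⟨⟨⟨f, Function.Injective.of_lt_imp_ne hne⟩, fun {i j} => ?_⟩⟩
  rcases lt_trichotomy i j with hij | rfl | hji
  · exact hadj i j hij
  · simp only [SimpleGraph.irrefl]
  · exact (G.adj_comm _ _).trans ((hadj j i hji).trans (H.adj_comm _ _))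

variable {V : Type*} {G : SimpleGraph V}

theorem isIndContained_of_alternating_four_cycle {a b c d : V} (hab : G.Adj a b)
    (hbc : ¬G.Adj b c) (hcd : G.Adj c d) (had : ¬G.Adj a d) (hne_bc : b ≠ c) (hne_ad : a ≠ d) :
    P4 ⊴ G ∨ C4 ⊴ G ∨ twoK2 ⊴ G := by
  have hne_ab : a ≠ b := hab.ne
  have hne_cd : c ≠ d := hcd.ne
  have hne_ac : a ≠ c := by rintro rfl; exact hbc hab.symm
  have hne_bd : b ≠ d := by rintro rfl; exact had hab
  by_cases hac : G.Adj a c <;> by_cases hbd : G.Adj b d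
  · refine .inr (.inl (isIndContained_of_forall_lt ![a, b, d, c] ?_ ?_)) <;>
      simp [Fin.forall_fin_succ, C4, G.adj_comm, *, Ne.symm]
  · refine .inl (isIndContained_of_forall_lt ![b, a, c, d] ?_ ?_) <;>
      simp [Fin.forall_fin_succ, P4, G.adj_comm, *, Ne.symm]
  · refine .inl (isIndContained_of_forall_lt ![a, b, d, c] ?_ ?_) <;>
      simp [Fin.forall_fin_succ, P4, G.adj_comm, *, Ne.symm]
  · refine .inr (.inr (isIndContained_of_forall_lt ![a, b, c, d] ?_ ?_)) <;>
      simp [Fin.forall_fin_succ, twoK2, G.adj_comm, *, Ne.symm]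

theorem vicinalLE_total (hP4 : ¬P4 ⊴ G) (hC4 : ¬C4 ⊴ G) (h2K2 : ¬twoK2 ⊴ G) :
    Std.Total (VicinalLE G) := by
  refine ⟨fun u v => ?_⟩
  by_contra! h
  obtain ⟨huv, hvu⟩ := h
  simp only [VicinalLE, not_forall] at huv hvu
  obtain ⟨x, hux, hxv, hvx⟩ := huv
  obtain ⟨y, hvy, hyu, huy⟩ := hvu
  rcases isIndContained_of_alternating_four_cycle hux (mt .symm hvx) hvy huy hxv hyu.symm
    with h | h | h
  exacts [hP4 h, hC4 h, h2K2 h]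

end ForbiddenSubgraphs

section VicinalPreorder

variable {V : Type*} {G : SimpleGraph V}

theorem VicinalLE.trans {u v w : V} (huv : VicinalLE G u v) (hvw : VicinalLE G v w) :
    VicinalLE G u w := by
  intro x hux hxw
  by_cases hxv : x = v
  · subst hxv
    by_cases huw : u = w
    · exact huw ▸ hux
    · exact (huv (hvw hux.symm huw).symm hxw.symm).symm
  · exact hvw (huv hux hxv) hxw

instance : IsTrans V (VicinalLE G) := ⟨fun _ _ _ => VicinalLE.trans⟩

theorem exists_vicinalLE_greatest [Std.Total (VicinalLE G)] {S : Finset V} (hS : S.Nonempty) :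
    ∃ v ∈ S, ∀ u ∈ S, VicinalLE G u v := by
  have : Nonempty S := hS.to_subtype
  have hdir : Directed (VicinalLE G) ((↑) : S → V) := Std.Total.directed _
  obtain ⟨v, hv⟩ := hdir.finset_le Finset.univ
  exact ⟨v, v.2, fun u hu => hv ⟨u, hu⟩ (Finset.mem_univ _)⟩

theorem exists_dominating_or_isolated [DecidableEq V] [Std.Total (VicinalLE G)] {S : Finset V}
    (hS : S.Nonempty) :
    ∃ v ∈ S, (∀ u ∈ S.erase v, G.Adj v u) ∨ ∀ u ∈ S.erase v, ¬G.Adj v u := by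
  obtain ⟨v, hvS, hv⟩ := exists_vicinalLE_greatest (G := G) hS
  by_cases hdom : ∀ u ∈ S.erase v, G.Adj v u
  · exact ⟨v, hvS, .inl hdom⟩
  push Not at hdom
  obtain ⟨u, hu, hvu⟩ := hdom
  -- A neighbour `w` of `u` would be adjacent to `u` while `v` is not, contradicting `w ≤ v`.
  refine ⟨u, Finset.mem_of_mem_erase hu, .inr fun w hw huw => hvu ?_⟩
  exact hv w (Finset.mem_of_mem_erase hw) huw.symm (Finset.ne_of_mem_erase hu)

end VicinalPreorder

/-- Realizes the subgraph of `G` induced by `S` inside the letter graph of the infinite word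
`abab⋯`, in which distinct positions `i` and `j` are adjacent iff the smaller one is even:
`f x` is the position, counted from `0`, assigned to the vertex `x`. -/
def IsAlternatingCode {V : Type*} (G : SimpleGraph V) (S : Set V) (f : V → ℕ) : Prop :=
  S.Pairwise fun x y => f x ≠ f y ∧ (G.Adj x y ↔ Even (min (f x) (f y)))

section AlternatingCode

variable {V : Type*} {G : SimpleGraph V}

theorem IsAlternatingCode.congr {S : Set V} {f g : V → ℕ} (hf : IsAlternatingCode G S f)
    (hfg : S.EqOn f g) : IsAlternatingCode G S g := fun x hx y hy hxy => by
  simpa only [hfg hx, hfg hy] using hf hx hy hxy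

theorem IsAlternatingCode.add_two {S : Set V} {f : V → ℕ} (hf : IsAlternatingCode G S f) :
    IsAlternatingCode G S fun x => f x + 2 := fun x hx y hy hxy => by
  obtain ⟨hne, hadj⟩ := hf hx hy hxy
  refine ⟨by simpa only [ne_eq, Nat.add_right_cancel_iff] using hne, ?_⟩
  rw [Nat.add_min_add_right, Nat.even_add, iff_true_right even_two, hadj]

theorem IsAlternatingCode.insert {S : Set V} {f : V → ℕ} (hf : IsAlternatingCode G S f) {v : V}
    (hlt : ∀ u ∈ S, f v < f u) (hadj : ∀ u ∈ S, G.Adj v u ↔ Even (f v)) :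
    IsAlternatingCode G (insert v S) f := by
  refine Set.pairwise_insert.2 ⟨hf, fun u hu _ => ?_⟩
  have hvu := hlt u hu
  rw [G.adj_comm u v, min_comm (f u), min_eq_left hvu.le]
  exact ⟨⟨hvu.ne, hadj u hu⟩, hvu.ne', hadj u hu⟩

theorem exists_isAlternatingCode_insert {S : Set V} {f : V → ℕ} (hf : IsAlternatingCode G S f)
    {v : V} (hv : v ∉ S) (h : (∀ u ∈ S, G.Adj v u) ∨ ∀ u ∈ S, ¬G.Adj v u) :
    ∃ g : V → ℕ, IsAlternatingCode G (insert v S) g ∧ g v < 2 ∧ ∀ u ∈ S, g u = f u + 2 := by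
  classical
  obtain ⟨k, hk, hadj⟩ : ∃ k < 2, ∀ u ∈ S, G.Adj v u ↔ Even k := by
    rcases h with hdom | hiso
    · exact ⟨0, two_pos, fun u hu => iff_of_true (hdom u hu) Even.zero⟩
    · exact ⟨1, one_lt_two, fun u hu => iff_of_false (hiso u hu) Nat.not_even_one⟩
  let g := Function.update (fun x => f x + 2) v k
  have hgv : g v = k := Function.update_self ..
  have hg : ∀ u ∈ S, g u = f u + 2 := fun u hu =>
    Function.update_of_ne (ne_of_mem_of_not_mem hu hv) ..
  refine ⟨g, (hf.add_two.congr fun u hu => (hg u hu).symm).insert (fun u hu => ?_) ?_, ?_, hg⟩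
  · rw [hgv, hg u hu]; omega
  · rwa [hgv]
  · rwa [hgv]

theorem exists_isAlternatingCode [Std.Total (VicinalLE G)] (S : Finset V) :
    ∃ f : V → ℕ, IsAlternatingCode G S f ∧ ∀ x ∈ S, f x < 2 * S.card := by
  classical
  induction S using Finset.strongInduction with
  | H S ih =>
    rcases S.eq_empty_or_nonempty with rfl | hS
    · exact ⟨0, by simp [IsAlternatingCode]⟩
    obtain ⟨v, hvS, hv⟩ := exists_dominating_or_isolated (G := G) hS
    obtain ⟨f, hf, hlt⟩ := ih (S.erase v) (Finset.erase_ssubset hvS)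
    obtain ⟨g, hg, hgv, hgf⟩ := exists_isAlternatingCode_insert hf (by simp) hv
    rw [← Finset.coe_insert, Finset.insert_erase hvS] at hg
    refine ⟨g, hg, fun x hx => ?_⟩
    have hcard := Finset.card_erase_add_one hvS
    rcases eq_or_ne x v with rfl | hxv
    · omega
    · have hx' : x ∈ S.erase v := Finset.mem_erase.2 ⟨hxv, hx⟩
      have := hlt x hx'
      have := hgf x hx'
      omega

theorem letterGraph_periodicWord_adj {n : ℕ} {i j : Fin (2 * n)} :
    (letterGraph thresholdDecoder (periodicWord n)).Adj i j ↔
      i ≠ j ∧ Even (min (i : ℕ) j) := by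
  have hdecoder : ∀ p q : Fin (2 * n),
      thresholdDecoder (periodicWord n p) (periodicWord n q) ↔ Even (p : ℕ) := by
    intro p q
    simp only [thresholdDecoder, periodicWord, Nat.even_iff]
    split_ifs <;> simp_all
  simp only [letterGraph, hdecoder]
  rcases lt_trichotomy i j with hij | rfl | hji
  · simp [hij, hij.ne, hij.le, hij.not_gt]
  · simp
  · simp [hji, hji.ne', hji.le, hji.not_gt]

theorem IsAlternatingCode.nonempty_embedding {n : ℕ} {f : V → ℕ}
    (hf : IsAlternatingCode G Set.univ f) (hlt : ∀ x, f x < 2 * n) :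
    Nonempty (G ↪g letterGraph thresholdDecoder (periodicWord n)) := by
  have hinj : Function.Injective f := fun x y hxy => by
    by_contra hne
    exact (hf trivial trivial hne).1 hxy
  refine ⟨⟨⟨fun x => ⟨f x, hlt x⟩, fun x y hxy => hinj (Fin.ext_iff.1 hxy)⟩, fun {x y} => ?_⟩⟩
  rcases eq_or_ne x y with rfl | hne
  · simp only [SimpleGraph.irrefl]
  · obtain ⟨hfne, hadj⟩ := hf trivial trivial hne
    rw [letterGraph_periodicWord_adj, hadj]
    exact and_iff_right (Fin.ne_of_val_ne hfne)

end AlternatingCode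

/-- `Tₙ`, the letter graph of `abab⋯ab` (length `2n`) with decoder `{(a,b),(a,a)}`,
contains every threshold graph (i.e. `(P₄, C₄, 2K₂)`-free graph) on `n` vertices as an
induced subgraph: it is an `n`-universal threshold graph. -/
theorem threshold_universal {V : Type} [Fintype V] (n : ℕ) (G : SimpleGraph V)
    (hcard : Fintype.card V = n)
    (hP4 : IsEmpty (P4 ↪g G)) (hC4 : IsEmpty (C4 ↪g G))
    (h2K2 : IsEmpty (twoK2 ↪g G)) :
    Nonempty (G ↪g letterGraph thresholdDecoder (periodicWord n)) := by
  have : Std.Total (VicinalLE G) :=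
    vicinalLE_total (not_nonempty_iff.2 hP4) (not_nonempty_iff.2 hC4) (not_nonempty_iff.2 h2K2)
  obtain ⟨f, hf, hlt⟩ := exists_isAlternatingCode (G := G) Finset.univ
  rw [Finset.coe_univ] at hf
  rw [Finset.card_univ, hcard] at hlt
  exact hf.nonempty_embedding fun x => hlt x (Finset.mem_univ x)
end

section
/- Let G be a graph with distinct vertices u and v such that N(v) = N(u) (v is a non-adjacent twin of u). If the graph G − v obtained by deleting v is a letter graph over an alphabet Σ with a decoder P such that the letter a assigned to u satisfies (a,a) ∉ P, then G is also a letter graph over Σ with decoder P: inserting a copy of the letter of u immediately next to it in a word representing G − v yields a word representing G. In particular, if G − v is a 3-letter graph with the decoder {(a,b),(b,c),(c,a)}, then so is G. -/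
/-- The cyclic decoder `{(a,b),(b,c),(c,a)}` over the alphabet `{a,b,c} = Fin 3`
(`a = 0`, `b = 1`, `c = 2`). -/
def cyclicDecoder : Fin 3 → Fin 3 → Prop := fun x y =>
  (x = 0 ∧ y = 1) ∨ (x = 1 ∧ y = 2) ∨ (x = 2 ∧ y = 0)

/-- `G` is a 3-letter graph with the decoder `{(a,b),(b,c),(c,a)}`. -/
def IsCyclic3Letter {V : Type} (G : SimpleGraph V) : Prop :=
  ∃ (n : ℕ) (w : Fin n → Fin 3), Nonempty (G ≃g letterGraph cyclicDecoder w)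

section VertexDeletion

variable {V W : Type*} {G : SimpleGraph V} {H : SimpleGraph W} {v : V} {v' : W}

theorem nonempty_iso_of_induce_ne_iso
    (e : G.induce {x | x ≠ v} ≃g H.induce {y | y ≠ v'})
    (h : ∀ x, H.Adj v' (e x) ↔ G.Adj v x) : Nonempty (G ≃g H) := by
  classical
  let e' : {x // x ≠ v} ≃ {y // y ≠ v'} := e.toEquiv
  let f : V ≃ W :=
    (Equiv.optionSubtypeNe v).symm.trans (e'.optionCongr.trans (Equiv.optionSubtypeNe v'))
  have f_deleted : f v = v' := by simp [f]
  have f_of_ne (x : {x | x ≠ v}) : f x = e x := by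
    simp [f, e', Equiv.optionSubtypeNe_symm_of_ne x.2]
  refine ⟨f, fun {x y} ↦ ?_⟩
  by_cases hx : x = v <;> by_cases hy : y = v
  · simp [hx, hy]
  · simpa only [hx, f_deleted, f_of_ne ⟨y, hy⟩] using h ⟨y, hy⟩
  · simpa only [hy, f_deleted, f_of_ne ⟨x, hx⟩, SimpleGraph.adj_comm] using h ⟨x, hx⟩
  · rw [f_of_ne ⟨x, hx⟩, f_of_ne ⟨y, hy⟩]
    exact e.map_adj_iff

theorem nonempty_iso_of_twins {u : V} (huv : u ≠ v)
    (hG : G.neighborSet v = G.neighborSet u)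
    (e : G.induce {x | x ≠ v} ≃g H.induce {y | y ≠ v'})
    (hH : H.neighborSet v' = H.neighborSet (e ⟨u, huv⟩)) : Nonempty (G ≃g H) := by
  refine nonempty_iso_of_induce_ne_iso e fun x ↦ ?_
  calc
    H.Adj v' (e x) ↔ H.Adj (e ⟨u, huv⟩) (e x) := Set.ext_iff.mp hH (e x)
    _ ↔ G.Adj u x := e.map_adj_iff
    _ ↔ G.Adj v x := (Set.ext_iff.mp hG x).symm

end VertexDeletion

section LetterGraph

variable {n : ℕ} {α : Type*} {P : α → α → Prop}

theorem letterGraph_adj {w : Fin n → α} {i j : Fin n} :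
    (letterGraph P w).Adj i j ↔ i < j ∧ P (w i) (w j) ∨ j < i ∧ P (w j) (w i) :=
  Iff.rfl

theorem letterGraph_neighborSet_succ_eq_castSucc {w : Fin (n + 1) → α} {i : Fin n}
    (hw : w i.succ = w i.castSucc) (hP : ¬ P (w i.castSucc) (w i.castSucc)) :
    (letterGraph P w).neighborSet i.succ = (letterGraph P w).neighborSet i.castSucc := by
  ext j
  simp only [SimpleGraph.mem_neighborSet, letterGraph_adj, hw]
  obtain hj | rfl | rfl | hj :
      j < i.castSucc ∨ j = i.castSucc ∨ j = i.succ ∨ i.succ < j := by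
    simp only [Fin.lt_def, Fin.ext_iff, Fin.val_succ, Fin.val_castSucc]
    omega
  · simp [hj, hj.not_gt, hj.trans i.castSucc_lt_succ, (hj.trans i.castSucc_lt_succ).not_gt]
  · simp [hP]
  · simp [hw, hP]
  · simp [hj, hj.not_gt, i.castSucc_lt_succ.trans hj, (i.castSucc_lt_succ.trans hj).not_gt]

/-- Undoes a letter insertion by deleting a vertex: `w` represents the graph left after removing the
inserted position `p`, its positions being renumbered by `p.succAbove`. -/
def letterGraphIsoInduceInsertNth (p : Fin (n + 1)) (a : α) (w : Fin n → α) :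
    letterGraph P w ≃g
      (letterGraph P (Fin.insertNth (α := fun _ ↦ α) p a w)).induce {x | x ≠ p} where
  toEquiv := finSuccAboveEquiv p
  map_rel_iff' := by
    intro i j
    change (letterGraph P _).Adj (p.succAbove i) (p.succAbove j) ↔ _
    simp [letterGraph_adj]

theorem nonempty_iso_letterGraph_insertNth {V : Type*} {G : SimpleGraph V} {u v : V}
    (huv : u ≠ v) (htwin : G.neighborSet v = G.neighborSet u) {w : Fin n → α}
    (e : G.induce {x | x ≠ v} ≃g letterGraph P w)
    (hP : ¬ P (w (e ⟨u, huv⟩)) (w (e ⟨u, huv⟩))) :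
    Nonempty (G ≃g
      letterGraph P (Fin.insertNth (e ⟨u, huv⟩).succ (w (e ⟨u, huv⟩)) w)) := by
  let i := e ⟨u, huv⟩
  let w' : Fin (n + 1) → α := Fin.insertNth i.succ (w i) w
  have inserted_letter : w' i.succ = w i := Fin.insertNth_apply_same ..
  have original_letter : w' i.castSucc = w i := by
    simpa only [Fin.succAbove_succ_self] using
      Fin.insertNth_apply_succAbove (α := fun _ ↦ α) i.succ (w i) w i
  have twins : (letterGraph P w').neighborSet i.succ = (letterGraph P w').neighborSet i.castSucc :=
    letterGraph_neighborSet_succ_eq_castSucc (inserted_letter.trans original_letter.symm)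
      (by rwa [original_letter])
  refine nonempty_iso_of_twins huv htwin
    (e.trans (letterGraphIsoInduceInsertNth i.succ (w i) w)) ?_
  rw [twins, ← Fin.succAbove_succ_self]
  rfl

end LetterGraph

theorem not_cyclicDecoder_self (a : Fin 3) : ¬ cyclicDecoder a a := by
  unfold cyclicDecoder
  revert a
  decide

/-- Twin insertion: if `v` is a twin of `u` (`N(v) = N(u)`, so `u,v` non-adjacent) and
`G - v` is represented as a letter graph over a decoder `P` in which the letter `a` of
`u` satisfies `(a,a) ∉ P`, then inserting a copy of the letter of `u` immediately after
it yields a word representing `G`; in particular, if `G - v` is a 3-letter graph with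
the decoder `{(a,b),(b,c),(c,a)}`, then so is `G`. -/
theorem twin_insertion {V : Type} [Fintype V] (G : SimpleGraph V) (u v : V)
    (huv : u ≠ v) (htwin : G.neighborSet v = G.neighborSet u) :
    (∀ (α : Type) (P : α → α → Prop) (n : ℕ) (w : Fin n → α)
        (e : (G.induce {x : V | x ≠ v}) ≃g letterGraph P w),
      ¬ P (w (e ⟨u, huv⟩)) (w (e ⟨u, huv⟩)) →
      Nonempty (G ≃g
        letterGraph P (Fin.insertNth (e ⟨u, huv⟩).succ (w (e ⟨u, huv⟩)) w))) ∧
    (IsCyclic3Letter (G.induce {x : V | x ≠ v}) → IsCyclic3Letter G) :=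
  ⟨fun _ _ _ _ ↦ nonempty_iso_letterGraph_insertNth huv htwin,
    fun ⟨_, _, ⟨e⟩⟩ ↦
      ⟨_, _, nonempty_iso_letterGraph_insertNth huv htwin e (not_cyclicDecoder_self _)⟩⟩
end
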